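/- Let d ≥ 2, n ≥ 1, let x ∈ ℝ^n be a fixed signal, let η > 0, and let P be a Borel probability measure on ℝ^{n(d−1)}. Define f(y) = −(1/η) ln ∫ exp(−η λ(y, ξ(α, x))) dP(α) for y ∈ ℝ^d. If γ ∈ Γ satisfies λ(e_i, γ) ≤ f(e_i) for every i ∈ {1, …, d}, then λ(y, γ) ≤ f(y) for every y in the probability simplex Δ. -/

import Mathlib

/-!
For an outcome `y` with coordinates summing to one, `brier y ξ` is the `y`-weighted average of the
vertex losses `brier e_i ξ` minus a term depending on `y` alone (`brier_eq_sum_vertex`). The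
difference `brier y ξ - brier y γ` is therefore affine in `y`, and convexity of `exp` gives
`exp (-η (brier y ξ - brier y γ)) ≤ ∑ i, y i * exp (-η (brier e_i ξ - brier e_i γ))`.
Integrated over the experts, each vertex condition says that the `i`-th term on the right is at most
`y i`, so the left-hand side has integral at most `1`, which is the claim at `y`.
-/

open Finset MeasureTheory

noncomputable section

/-- Brier loss: squared Euclidean distance between prediction and outcome. -/
def brier {d : ℕ} (y γ : Fin d → ℝ) : ℝ := ∑ i, (γ i - y i) ^ 2

/-- The probability simplex in ℝ^d. -/
def probSimplex (d : ℕ) : Set (Fin d → ℝ) :=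
  {y | (∀ i, 0 ≤ y i) ∧ ∑ i, y i = 1}

/-- Linear expert prediction: ξ_i = 1/d + α_i'x for i < d-1, and the last
component is one minus the sum of the others. -/
def expertPred (n d : ℕ) (α : Fin (d - 1) → Fin n → ℝ) (x : Fin n → ℝ) : Fin d → ℝ :=
  fun i =>
    if h : (i : ℕ) < d - 1 then (1 : ℝ) / d + ∑ j, α ⟨i, h⟩ j * x j
    else 1 - ∑ k : Fin (d - 1), ((1 : ℝ) / d + ∑ j, α k j * x j)

lemma brier_single {d : ℕ} (i : Fin d) (ξ : Fin d → ℝ) :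
    brier (Pi.single i 1) ξ = ∑ k, ξ k ^ 2 - 2 * ξ i + 1 := by
  have h : ∀ k, (ξ k - (Pi.single i 1 : Fin d → ℝ) k) ^ 2
      = ξ k ^ 2 + (if k = i then -2 * ξ k + 1 else 0) := by
    intro k
    by_cases hk : k = i
    · subst hk; simp; ring
    · simp [hk]
  simp only [brier, h, Finset.sum_add_distrib, Finset.sum_ite_eq', Finset.mem_univ, if_true]
  ring

/-- The Brier loss is affine in the outcome, up to a term independent of the prediction. -/
lemma brier_eq_sum_vertex {d : ℕ} (y ξ : Fin d → ℝ) (hy : ∑ i, y i = 1) :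
    brier y ξ = ∑ i, y i * brier (Pi.single i 1) ξ - (1 - ∑ i, y i ^ 2) := by
  have h : ∑ i, y i * brier (Pi.single i 1) ξ
      = (∑ i, y i) * (∑ k, ξ k ^ 2 + 1) - 2 * ∑ i, ξ i * y i := by
    rw [Finset.sum_mul, Finset.mul_sum, ← Finset.sum_sub_distrib]
    refine Finset.sum_congr rfl fun i _ => ?_
    rw [brier_single]; ring
  have h2 : brier y ξ = ∑ k, ξ k ^ 2 - 2 * ∑ i, ξ i * y i + ∑ i, y i ^ 2 := by
    rw [Finset.mul_sum, ← Finset.sum_sub_distrib, ← Finset.sum_add_distrib]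
    refine Finset.sum_congr rfl fun i _ => ?_
    ring
  rw [h, h2, hy]; ring

lemma measurable_expertPred (n d : ℕ) (x : Fin n → ℝ) :
    Measurable fun α : Fin (d - 1) → Fin n → ℝ => expertPred n d α x := by
  refine measurable_pi_lambda _ fun i => ?_
  unfold expertPred
  by_cases h : (i : ℕ) < d - 1
  · simp only [h, dite_true]; fun_prop
  · simp only [h, dite_false]; fun_prop

lemma integrable_exp_brier (n d : ℕ) (x : Fin n → ℝ) (η : ℝ) (hη : 0 < η)
    (P : Measure (Fin (d - 1) → Fin n → ℝ)) [IsProbabilityMeasure P] (y : Fin d → ℝ) :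
    Integrable (fun α => Real.exp (-η * brier y (expertPred n d α x))) P := by
  have hm : Measurable fun α => Real.exp (-η * brier y (expertPred n d α x)) := by
    have := fun i => (measurable_pi_apply i).comp (measurable_expertPred n d x)
    simp only [Function.comp_def] at this
    unfold brier
    fun_prop
  refine Integrable.of_bound hm.aestronglyMeasurable 1 (ae_of_all _ fun α => ?_)
  rw [Real.norm_eq_abs, Real.abs_exp, Real.exp_le_one_iff]
  have : 0 ≤ brier y (expertPred n d α x) := Finset.sum_nonneg fun i _ => sq_nonneg _
  nlinarith

/-- Exponential form of a loss bound `l ≤ f y`. -/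
lemma le_neg_log_iff {η l I : ℝ} (hη : 0 < η) (hI : 0 < I) :
    l ≤ -(1 / η) * Real.log I ↔ Real.exp (η * l) * I ≤ 1 := by
  have h1 : -(1 / η) * Real.log I = (-Real.log I) / η := by ring
  rw [h1, le_div_iff₀ hη, ← Real.log_nonpos_iff (by positivity),
    Real.log_mul (Real.exp_pos _).ne' hI.ne', Real.log_exp]
  constructor <;> intro h <;> linarith

/-- If the loss of γ ∈ Γ on each vertex outcome is bounded by the generalized
prediction f, then the same bound holds for every outcome in the whole simplex. -/
theorem generalized_prediction_extends (n d : ℕ) (hn : 1 ≤ n) (hd : 2 ≤ d)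
    (x : Fin n → ℝ) (η : ℝ) (hη : 0 < η)
    (P : Measure (Fin (d - 1) → Fin n → ℝ)) [IsProbabilityMeasure P]
    (f : (Fin d → ℝ) → ℝ)
    (hf : ∀ y : Fin d → ℝ, f y =
      -(1 / η) * Real.log (∫ α, Real.exp (-η * brier y (expertPred n d α x)) ∂P))
    (γ : Fin d → ℝ) (hγ : ∑ i, γ i = 1)
    (hvertex : ∀ i : Fin d, brier (Pi.single i 1) γ ≤ f (Pi.single i 1)) :
    ∀ y ∈ probSimplex d, brier y γ ≤ f y := by
  rintro y ⟨hy0, hy1⟩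
  have hint := integrable_exp_brier n d x η hη P
  have hpos : ∀ z : Fin d → ℝ,
      0 < ∫ α, Real.exp (-η * brier z (expertPred n d α x)) ∂P :=
    fun z => integral_exp_pos (hint z)
  have hv : ∀ i : Fin d, Real.exp (η * brier (Pi.single i 1) γ) *
      ∫ α, Real.exp (-η * brier (Pi.single i 1) (expertPred n d α x)) ∂P ≤ 1 := fun i =>
    (le_neg_log_iff hη (hpos _)).1 (by simpa only [hf] using hvertex i)
  rw [hf, le_neg_log_iff hη (hpos y), ← integral_const_mul]
  have key : ∀ α, Real.exp (η * brier y γ) * Real.exp (-η * brier y (expertPred n d α x)) ≤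
      ∑ i, y i * (Real.exp (η * brier (Pi.single i 1) γ) *
        Real.exp (-η * brier (Pi.single i 1) (expertPred n d α x))) := by
    intro α
    simp only [← Real.exp_add]
    have hc := convexOn_exp.map_sum_le (t := Finset.univ) (w := y)
      (p := fun i => η * brier (Pi.single i 1) γ +
        -η * brier (Pi.single i 1) (expertPred n d α x))
      (fun i _ => hy0 i) hy1 (fun i _ => Set.mem_univ _)
    simp only [smul_eq_mul] at hc
    -- the exponents agree because the terms in `y` alone cancel between `γ` and the expert
    refine le_of_eq_of_le (congrArg Real.exp ?_) hc
    rw [brier_eq_sum_vertex y γ hy1, brier_eq_sum_vertex y _ hy1]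
    have : ∀ i, y i * (η * brier (Pi.single i 1) γ +
        -η * brier (Pi.single i 1) (expertPred n d α x)) =
        η * (y i * brier (Pi.single i 1) γ) -
        η * (y i * brier (Pi.single i 1) (expertPred n d α x)) := fun i => by ring
    simp only [this, Finset.sum_sub_distrib, ← Finset.mul_sum]
    ring
  have hterm : ∀ i ∈ (Finset.univ : Finset (Fin d)), Integrable (fun α =>
      y i * (Real.exp (η * brier (Pi.single i 1) γ) *
        Real.exp (-η * brier (Pi.single i 1) (expertPred n d α x)))) P :=
    fun i _ => ((hint _).const_mul _).const_mul _
  refine (integral_mono ((hint y).const_mul _) (integrable_finsetSum _ hterm) key).trans ?_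
  rw [integral_finsetSum _ hterm]
  refine (Finset.sum_le_sum fun i _ => ?_).trans_eq hy1
  rw [integral_const_mul, integral_const_mul]
  exact mul_le_of_le_one_right (hy0 i) (hv i)
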